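/- Lemma 4.1. Let Φ = {log φ_n}_{n∈ℕ} be a quasi-multiplicative subadditive potential with bounded distortion on a mixing two-sided subshift of finite type (Σ_T, σ), and let μ be its unique equilibrium state (which has the subadditive Gibbs property). If μ is totally ergodic, then μ is mixing. -/

import Mathlib

/-!
The statement follows from a theorem of Ornstein type: if a measure-preserving map `S` is totally
ergodic and there is a constant `D` with
`limsup μ(A ∩ S⁻ⁿB) ≤ D μ(A) μ(B)` for all measurable `A`, `B`, then `S` is mixing.

*The upper bound* (`asympDominated_of_gibbs`). Applying the upper Gibbs bound to a word `IKJ`,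
subadditivity of the potential, and the lower Gibbs bound to `I`, `K` and `J` gives
`μ[IKJ] ≤ C⁴ μ[I] μ[K] μ[J]`. Summing over all words `K` of a given length bounds
`μ([I] ∩ σ⁻ⁿ[J])` by `C⁴ μ[I] μ[J]` once `n > |I|`; summing over `I` and `J` and approximating
by sets depending on finitely many coordinates gives the bound for arbitrary measurable sets.

*From the upper bound to mixing* (`isMixing_of_asympDominated`). Mixing is tested along
ultrafilters `U` on `ℕ` converging to infinity. The Koopman operators converge weakly along `U` to
an operator `P` on `L²(μ)`, and mixing along `U` says that `P g` is the constant `∫ g`.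

* The upper bound says `|P u| ≤ D ‖u‖` almost everywhere, hence
  `∑ ‖P e‖² ≤ D²` over orthonormal families: `P` is Hilbert–Schmidt and therefore compact
  (`sum_norm_sq_le`, `isCompactOperator_of_sum_norm_sq_le`).
* `P` commutes with the Koopman operators, so the orbit of `P g` is contained in the image under
  `P` of a ball and is relatively compact. As the Koopman operators are isometries, `P g` returns
  arbitrarily close to itself at arbitrarily late times (`exists_ultrafilter_tendsto_self`).
* The sublevel sets `A` of such a recurrent function are rigid: `μ(A ∆ S⁻ⁿA) → 0` along some
  ultrafilter. For a rigid set the upper bound gives `μ(A) ≤ D μ(A)²`, so `μ(A)` is either `0` or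
  at least `1 / D`. This also applies to the rigid sets `A ∆ S⁻ᵏA`, whose measure is small for
  suitable `k ≥ 1`; hence `A` is `Sᵏ`-invariant modulo `μ`, and trivial by total ergodicity
  (`RigidAlong.trivial`). So `P g` is almost everywhere constant
  (`ae_const_of_tendsto_koopman`).
-/

open Filter MeasureTheory
open scoped ENNReal

namespace SubEq

variable {X : Type*}

/-! ### Bowen balls, separated sets, topological pressure -/

/-- The Bowen ball `B_n(x,ε)` with respect to a distance function `ρ` and a map `f`. -/
def bowenBall (ρ : X → X → ℝ) (f : X → X) (n : ℕ) (ε : ℝ) (x : X) : Set X :=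
  {y | ∀ k < n, ρ (f^[k] x) (f^[k] y) ≤ ε}

/-- `E` is `(n,ε)`-separated for `f` with respect to the distance `ρ`. -/
def IsSeparatedSet (ρ : X → X → ℝ) (f : X → X) (n : ℕ) (ε : ℝ) (E : Finset X) : Prop :=
  ∀ x ∈ E, ∀ y ∈ E, x ≠ y → ∃ k < n, ε ≤ ρ (f^[k] x) (f^[k] y)

/-- The subadditive topological pressure
`P(Φ) = lim_{ε→0} limsup_n (1/n) log sup { Σ_{x∈E} φ_n x : E (n,ε)-separated }`;
since the inner quantity is monotone as `ε` decreases, the limit as `ε → 0` is the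
supremum over `ε > 0`. -/
noncomputable def pressure (ρ : X → X → ℝ) (f : X → X) (φ : ℕ → X → ℝ) : ℝ :=
  sSup {p : ℝ | ∃ ε > (0:ℝ), p = atTop.limsup (fun n =>
    Real.log (sSup ((fun E : Finset X => ∑ x ∈ E, φ n x) ''
      {E : Finset X | IsSeparatedSet ρ f n ε E})) / n)}

/-- `Φ = {log φ_n}` is a subadditive potential on `(X,f)`:
each `φ_n` is continuous and positive and
`log φ_{m+n} ≤ log φ_m + log φ_n ∘ f^m`. -/
def IsSubadditivePotential [TopologicalSpace X] (f : X → X) (φ : ℕ → X → ℝ) : Prop :=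
  (∀ n, Continuous (φ n)) ∧ (∀ n x, 0 < φ n x) ∧
    ∀ m n, 1 ≤ m → 1 ≤ n → ∀ x : X,
      Real.log (φ (m + n) x) ≤ Real.log (φ m x) + Real.log (φ n (f^[m] x))

/-! ### Kolmogorov–Sinai entropy -/

/-- Static entropy `H_μ(ξ)` of the finite partition of `X` given by the fibers of
`p : X → ι`. -/
noncomputable def partInfo [MeasurableSpace X] (μ : Measure X) {ι : Type} [Fintype ι]
    (p : X → ι) : ℝ :=
  ∑ i : ι, Real.negMulLog ((μ (p ⁻¹' {i})).toReal)

/-- The dynamical refinement `⋁_{k=0}^{n-1} f^{-k} ξ` of the partition given by `p`. -/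
def refinePart (f : X → X) {ι : Type} (p : X → ι) (n : ℕ) : X → (Fin n → ι) :=
  fun x k => p (f^[(k : ℕ)] x)

/-- Entropy of `f` relative to the partition given by `p`; by subadditivity the limit
defining it equals the infimum. -/
noncomputable def entropyOfPart [MeasurableSpace X] (μ : Measure X) (f : X → X)
    {ι : Type} [Fintype ι] (p : X → ι) : ℝ :=
  ⨅ n : ℕ, partInfo μ (refinePart f p (n + 1)) / (n + 1)

/-- The Kolmogorov–Sinai entropy `h_μ(f)`: the supremum over all finite measurable
partitions of the corresponding partition entropies. -/
noncomputable def entropyKS [MeasurableSpace X] (μ : Measure X) (f : X → X) : ℝ :=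
  sSup {h : ℝ | ∃ (m : ℕ) (p : X → Fin m),
    (∀ i, MeasurableSet (p ⁻¹' {i})) ∧ h = entropyOfPart μ f p}

/-! ### Equilibrium states -/

/-- `μ` is an equilibrium state of the subadditive potential `Φ = {log φ_n}`:
it is an `f`-invariant Borel probability measure with
`h_μ(f) + lim_n (1/n) ∫ log φ_n dμ = P(Φ)`. -/
def IsEqState [TopologicalSpace X] [MeasurableSpace X] (ρ : X → X → ℝ) (f : X → X)
    (φ : ℕ → X → ℝ) (μ : Measure X) : Prop :=
  IsProbabilityMeasure μ ∧ MeasurePreserving f μ μ ∧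
    ∃ L : ℝ, Tendsto (fun n => (∫ x, Real.log (φ n x) ∂μ) / n) atTop (nhds L) ∧
      entropyKS μ f + L = pressure ρ f φ

/-- Bounded distortion: there is `C ≥ 1` such that for all sufficiently small `ε > 0`,
all `x`, `n` and all `y,z ∈ B_n(x,ε)` one has `C⁻¹ ≤ φ_n(y)/φ_n(z) ≤ C`. -/
def HasBoundedDistortion (ρ : X → X → ℝ) (f : X → X) (φ : ℕ → X → ℝ) : Prop :=
  ∃ C : ℝ, 1 ≤ C ∧ ∃ ε₀ > (0:ℝ), ∀ ε, 0 < ε → ε ≤ ε₀ → ∀ (x : X) (n : ℕ),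
    ∀ y ∈ bowenBall ρ f n ε x, ∀ z ∈ bowenBall ρ f n ε x,
      C⁻¹ ≤ φ n y / φ n z ∧ φ n y / φ n z ≤ C

/-- The lower subadditive Gibbs property:
for every `ε > 0` there is `C ≥ 1` with `μ(B_n(x,ε)) ≥ C⁻¹ e^{-nP(Φ)} φ_n(x)`. -/
def HasLowerGibbs [TopologicalSpace X] [MeasurableSpace X] (ρ : X → X → ℝ) (f : X → X)
    (φ : ℕ → X → ℝ) (μ : Measure X) : Prop :=
  ∀ ε > (0:ℝ), ∃ C : ℝ, 1 ≤ C ∧ ∀ (x : X) (n : ℕ),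
    ENNReal.ofReal (C⁻¹ * Real.exp (-(n : ℝ) * pressure ρ f φ) * φ n x)
      ≤ μ (bowenBall ρ f n ε x)

/-- Expansivity of an invertible map `f` with inverse `finv`. -/
def IsExpansive (ρ : X → X → ℝ) (f finv : X → X) : Prop :=
  ∃ ε₀ > (0:ℝ), ∀ x y : X,
    (∀ n : ℕ, ρ (f^[n] x) (f^[n] y) ≤ ε₀ ∧ ρ (finv^[n] x) (finv^[n] y) ≤ ε₀) → x = y

/-! ### Mixing properties -/

/-- The Kolmogorov property of the invertible measure-preserving system `(X,μ,f)`
(`finv` is the inverse of `f`): there is a sub-σ-algebra `K` with `K ⊆ fK`,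
`⋁_{n≥0} f^n K` the full σ-algebra, and `⋂_{n≥0} f^{-n} K` trivial mod `μ`. -/
def HasKProperty [m : MeasurableSpace X] (μ : Measure X) (f finv : X → X) : Prop :=
  ∃ K : MeasurableSpace X, K ≤ m ∧ K ≤ K.map f ∧
    (⨆ n : ℕ, K.map (f^[n])) = m ∧
    ∀ A : Set X, MeasurableSet[⨅ n : ℕ, K.map (finv^[n])] A → μ A = 0 ∨ μ A = 1

/-- Mixing of a measure-preserving system. -/
def IsMixing [MeasurableSpace X] (μ : Measure X) (f : X → X) : Prop :=
  ∀ A B : Set X, MeasurableSet A → MeasurableSet B →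
    Tendsto (fun n => μ ((f^[n]) ⁻¹' A ∩ B)) atTop (nhds (μ A * μ B))

/-- A set of natural numbers has upper density zero. -/
def UpperDensityZero (E : Set ℕ) : Prop :=
  Tendsto (fun n => (Nat.card (E ∩ Set.Iio n : Set ℕ) : ℝ) / n) atTop (nhds 0)

/-- Weak mixing: for all measurable `A,B` there is a set `E ⊆ ℕ` of upper density zero
such that `μ(f^n A ∩ B) → μ(A)μ(B)` along `n ∉ E`. -/
def IsWeaklyMixing [MeasurableSpace X] (μ : Measure X) (f : X → X) : Prop :=
  ∀ A B : Set X, MeasurableSet A → MeasurableSet B →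
    ∃ E : Set ℕ, UpperDensityZero E ∧
      Tendsto (fun n => μ ((f^[n]) ⁻¹' A ∩ B)) (atTop ⊓ Filter.principal Eᶜ)
        (nhds (μ A * μ B))

/-- Total ergodicity: `f^n` is ergodic for every `n ≥ 1`. -/
def IsTotallyErgodic [MeasurableSpace X] (μ : Measure X) (f : X → X) : Prop :=
  ∀ n : ℕ, 1 ≤ n → Ergodic (f^[n]) μ

/-! ### Measure-theoretic isomorphism and the Bernoulli property -/

/-- Measure-theoretic isomorphism of the systems `(X,μ,f)` and `(Y,ν,g)`. -/
def IsMeasureIso {Y : Type*} [MeasurableSpace X] [MeasurableSpace Y]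
    (μ : Measure X) (ν : Measure Y) (f : X → X) (g : Y → Y) : Prop :=
  ∃ Θ : X → Y, Measurable Θ ∧ Measure.map Θ μ = ν ∧
    (∀ᵐ x ∂μ, Θ (f x) = g (Θ x)) ∧
    ∃ Ψ : Y → X, Measurable Ψ ∧ (∀ᵐ x ∂μ, Ψ (Θ x) = x) ∧ (∀ᵐ y ∂ν, Θ (Ψ y) = y)

/-- The left shift on a full shift space `ℤ → ι`. -/
def fullShift {ι : Type*} : (ℤ → ι) → (ℤ → ι) := fun x i => x (i + 1)

/-- `(X,μ,f)` is Bernoulli: it is measurably isomorphic to a Bernoulli shift, i.e. to a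
two-sided full shift on a finite alphabet equipped with a product (i.i.d.) measure. -/
def IsBernoulli [MeasurableSpace X] (μ : Measure X) (f : X → X) : Prop :=
  ∃ (m : ℕ) (p : Fin m → ℝ≥0∞), (∑ i : Fin m, p i) = 1 ∧
    ∃ ν : Measure (ℤ → Fin m),
      (∀ (s : Finset ℤ) (a : ℤ → Fin m),
        ν {x : ℤ → Fin m | ∀ i ∈ s, x i = a i} = ∏ i ∈ s, p (a i)) ∧
      IsMeasureIso μ ν f fullShift
/-! ### Two-sided subshifts of finite type -/

/-- The two-sided subshift of finite type determined by the 0-1 (Boolean) adjacency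
matrix `T` on `q` symbols. -/
abbrev SigmaSFT (q : ℕ) (T : Fin q → Fin q → Bool) : Type :=
  {x : ℤ → Fin q // ∀ i : ℤ, T (x i) (x (i + 1)) = true}

variable {q : ℕ} {T : Fin q → Fin q → Bool}

/-- The left shift on `Σ_T`. -/
def shiftSFT : SigmaSFT q T → SigmaSFT q T :=
  fun x => ⟨fun i => x.1 (i + 1), fun i => by simpa [add_assoc] using x.2 (i + 1)⟩

/-- The inverse of the left shift on `Σ_T`. -/
def shiftSFTInv : SigmaSFT q T → SigmaSFT q T :=
  fun x => ⟨fun i => x.1 (i - 1), fun i => by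
    have h := x.2 (i - 1)
    rwa [show i - 1 + 1 = i + 1 - 1 by ring] at h⟩

lemma exists_disagree {x y : SigmaSFT q T} (h : x ≠ y) :
    ∃ n : ℕ, x.1 (n : ℤ) ≠ y.1 (n : ℤ) ∨ x.1 (-(n : ℤ)) ≠ y.1 (-(n : ℤ)) := by
  by_contra hc
  push_neg at hc
  refine h (Subtype.ext (funext fun i => ?_))
  rcases Int.natAbs_eq i with h' | h'
  · rw [h']; exact (hc i.natAbs).1
  · rw [h']; exact (hc i.natAbs).2

open Classical in
/-- The metric `d(x,y) = 2^{-k}` on `Σ_T`, where `k` is the largest integer such that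
`x_i = y_i` for all `|i| < k`. -/
noncomputable def distSFT (x y : SigmaSFT q T) : ℝ :=
  if h : x = y then 0
  else (2 : ℝ) ^ (-(Nat.find (exists_disagree h) : ℤ))

/-- Primitivity of the adjacency matrix `T` (equivalent to topological mixing of the
subshift): some power `T^N` has all entries positive, i.e. any two symbols are
connected by an admissible word of length `N+1`. -/
def IsPrimitive (T : Fin q → Fin q → Bool) : Prop :=
  ∃ N : ℕ, 1 ≤ N ∧ ∀ i j : Fin q, ∃ w : ℕ → Fin q, w 0 = i ∧ w N = j ∧
    ∀ k < N, T (w k) (w (k + 1)) = true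

/-! ### Admissible words and cylinders -/

/-- A word is admissible if consecutive symbols are allowed by `T`. -/
def IsAdmissible (T : Fin q → Fin q → Bool) (I : List (Fin q)) : Prop :=
  I ≠ [] ∧ I.Chain' (fun a b => T a b = true)

/-- The cylinder set `[I] = {x : x_0 … x_{n-1} = I}` of a word `I` of length `n`. -/
def cylinder (I : List (Fin q)) : Set (SigmaSFT q T) :=
  {x | ∀ (k : ℕ) (hk : k < I.length), x.1 (k : ℤ) = I.get ⟨k, hk⟩}

/-- `Φ̃(I) = sup_{x ∈ [I]} φ_{|I|}(x)`. -/
noncomputable def wordSup (φ : ℕ → SigmaSFT q T → ℝ) (I : List (Fin q)) : ℝ :=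
  sSup ((fun x => φ I.length x) '' cylinder I)

/-- Quasi-multiplicativity of a subadditive potential `Φ` on `Σ_T`: there are `c > 0`
and `k ∈ ℕ` such that any two admissible words `I, J` can be connected by a word `K`
of length `≤ k` with `IKJ` admissible and `Φ̃(IKJ) ≥ c Φ̃(I) Φ̃(J)`. -/
def IsQuasiMultiplicative (T : Fin q → Fin q → Bool)
    (φ : ℕ → SigmaSFT q T → ℝ) : Prop :=
  ∃ c > (0:ℝ), ∃ k : ℕ, ∀ I J : List (Fin q), IsAdmissible T I → IsAdmissible T J →
    ∃ K : List (Fin q), K.length ≤ k ∧ IsAdmissible T (I ++ K ++ J) ∧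
      wordSup φ (I ++ K ++ J) ≥ c * wordSup φ I * wordSup φ J
/-- The subadditive Gibbs property (with constant `C`) of `μ` on cylinders:
`C⁻¹ ≤ μ([I]) / (e^{-nP(Φ)} φ_n(x)) ≤ C` for `I` admissible of length `n`, `x ∈ [I]`. -/
def HasGibbsProperty {q : ℕ} {T : Fin q → Fin q → Bool}
    (φ : ℕ → SigmaSFT q T → ℝ) (μ : Measure (SigmaSFT q T)) (C : ℝ) : Prop :=
  ∀ I : List (Fin q), IsAdmissible T I → ∀ x ∈ cylinder (T := T) I,
    ENNReal.ofReal (C⁻¹ * (Real.exp (-(I.length : ℝ) * pressure distSFT shiftSFT φ) *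
        φ I.length x)) ≤ μ (cylinder I) ∧
      μ (cylinder I) ≤ ENNReal.ofReal (C * (Real.exp
        (-(I.length : ℝ) * pressure distSFT shiftSFT φ) * φ I.length x))

/-- Bounded distortion with a given constant `C`. -/
def HasBoundedDistortionWith {Y : Type*} (ρ : Y → Y → ℝ) (f : Y → Y)
    (φ : ℕ → Y → ℝ) (C : ℝ) : Prop :=
  1 ≤ C ∧ ∃ ε₀ > (0:ℝ), ∀ ε, 0 < ε → ε ≤ ε₀ → ∀ (x : Y) (n : ℕ),
    ∀ y ∈ bowenBall ρ f n ε x, ∀ z ∈ bowenBall ρ f n ε x,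
      C⁻¹ ≤ φ n y / φ n z ∧ φ n y / φ n z ≤ C

/-! ### Weak limits, Hilbert–Schmidt operators and recurrence -/

section Hilbert
open Topology
variable {H : Type*} [NormedAddCommGroup H] [InnerProductSpace ℝ H]

/-- Linear isometries of a Hilbert space converge in the weak operator topology along every
ultrafilter. -/
lemma exists_weakLimit [CompleteSpace H] (V : ℕ → H →ₗᵢ[ℝ] H) (U : Ultrafilter ℕ) :
    ∃ P : H →L[ℝ] H, ∀ f g : H,
      Tendsto (fun n => inner ℝ f (V n g)) U (𝓝 (inner ℝ f (P g))) := by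
  have hbd : ∀ (f g : H) (n : ℕ), |inner ℝ (V n g) f| ≤ ‖g‖ * ‖f‖ := fun f g n =>
    (abs_real_inner_le_norm _ _).trans (by rw [LinearIsometry.norm_map])
  -- The matrix coefficients stay in a compact interval, so they converge along `U`.
  have hlim : ∀ f g, ∃ a : ℝ, |a| ≤ ‖g‖ * ‖f‖ ∧
      Tendsto (fun n => inner ℝ (V n g) f) U (𝓝 a) := by
    intro f g
    obtain ⟨a, ha, hle⟩ := (isCompact_closedBall (0 : ℝ) (‖g‖ * ‖f‖)).ultrafilter_le_nhds
      (U.map (fun n => inner ℝ (V n g) f)) (by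
        rw [le_principal_iff]
        exact Filter.mem_map.2 (Filter.univ_mem' fun n => by simpa using hbd f g n))
    exact ⟨a, by simpa using ha, hle⟩
  choose L hL1 hL2 using hlim
  -- Riesz representation of the limiting bilinear form.
  have hP : ∀ g, ∃ v : H, ‖v‖ ≤ ‖g‖ ∧ ∀ f, inner ℝ v f = L f g := by
    intro g
    let l : H →L[ℝ] ℝ := LinearMap.mkContinuous
      { toFun := fun f => L f g
        map_add' := fun f f' => tendsto_nhds_unique (hL2 (f + f') g)
          (by simpa [inner_add_right] using (hL2 f g).add (hL2 f' g))
        map_smul' := fun c f => tendsto_nhds_unique (hL2 (c • f) g)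
          (by simpa [inner_smul_right] using (hL2 f g).const_mul c) } ‖g‖ (fun f => hL1 f g)
    refine ⟨(InnerProductSpace.toDual ℝ H).symm l, ?_, fun f => ?_⟩
    · rw [LinearIsometryEquiv.norm_map]
      exact LinearMap.mkContinuous_norm_le _ (norm_nonneg _) _
    · rw [InnerProductSpace.toDual_symm_apply]; rfl
  choose Q hQ1 hQ2 using hP
  refine ⟨LinearMap.mkContinuous
    { toFun := Q
      map_add' := fun g g' => ext_inner_right ℝ fun f => ?_
      map_smul' := fun c g => ext_inner_right ℝ fun f => ?_ } 1 (fun g => by simpa using hQ1 g),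
    fun f g => ?_⟩
  · rw [inner_add_left, hQ2, hQ2, hQ2]
    exact tendsto_nhds_unique (hL2 f (g + g'))
      (by simpa [inner_add_left] using (hL2 f g).add (hL2 f g'))
  · rw [inner_smul_left, hQ2, hQ2]
    exact tendsto_nhds_unique (hL2 f (c • g))
      (by simpa [inner_smul_left] using (hL2 f g).const_mul c)
  · change Tendsto _ _ (𝓝 (inner ℝ f (Q g)))
    rw [real_inner_comm, hQ2]
    simpa only [real_inner_comm] using hL2 f g

/-- A Hilbert–Schmidt operator is compact, being the norm limit of the finite partial sums of
`x ↦ ∑ i, ⟪b i, x⟫ • P (b i)` for a Hilbert basis `b`. -/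
lemma isCompactOperator_of_sum_norm_sq_le [CompleteSpace H] (P : H →L[ℝ] H) (K : ℝ)
    (h : ∀ s : Finset H, Orthonormal ℝ ((↑) : s → H) → ∑ e ∈ s, ‖P e‖ ^ 2 ≤ K) :
    IsCompactOperator P := by
  obtain ⟨w, b, hb⟩ := exists_hilbertBasis ℝ H
  have hsum : Summable (fun i : w => ‖P (b i)‖ ^ 2) := by
    refine summable_of_sum_le (c := K) (fun _ => sq_nonneg _) fun F => ?_
    have := h (F.map (Function.Embedding.subtype _)) ?_
    · simpa [hb] using this
    · have ho := b.orthonormal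
      rw [hb] at ho
      have := ho.comp (fun x : {x // x ∈ F.map (Function.Embedding.subtype _)} =>
        (⟨x.1, by have := x.2; simp only [Finset.mem_map] at this; obtain ⟨a, -, h⟩ := this
                  rw [← h]; exact a.2⟩ : w)) (fun x y hxy => by
          apply Subtype.ext; simpa using hxy)
      exact this
  let R : w → H →L[ℝ] H := fun i => (innerSL ℝ (b i)).smulRight (P (b i))
  have hR : ∀ x, HasSum (fun i => R i x) (P x) := by
    intro x
    have := (b.hasSum_repr x).mapL P
    simpa [R, b.repr_apply_apply] using this
  -- Cauchy–Schwarz and Bessel's inequality.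
  have hbound : ∀ (G : Finset w) (x : H),
      ‖∑ i ∈ G, R i x‖ ≤ √(∑ i ∈ G, ‖P (b i)‖ ^ 2) * ‖x‖ := by
    intro G x
    calc ‖∑ i ∈ G, R i x‖ ≤ ∑ i ∈ G, ‖P (b i)‖ * |inner ℝ (b i) x| := by
          refine (norm_sum_le _ _).trans (Finset.sum_le_sum fun i _ => ?_)
          simp [R, norm_smul, mul_comm]
      _ ≤ √(∑ i ∈ G, ‖P (b i)‖ ^ 2) * √(∑ i ∈ G, |inner ℝ (b i) x| ^ 2) :=
          Real.sum_mul_le_sqrt_mul_sqrt _ _ _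
      _ ≤ _ := by
          gcongr
          apply Real.sqrt_le_iff.2 ⟨norm_nonneg _, ?_⟩
          simpa using b.orthonormal.sum_inner_products_le (x := x) (s := G)
  have htend : Tendsto (fun F : Finset w => ∑ i ∈ F, R i) atTop (𝓝 P) := by
    classical
    rw [Metric.tendsto_atTop]
    intro ε hε
    obtain ⟨F₀, hF₀⟩ := summable_iff_vanishing_norm.1 hsum ((ε / 2) ^ 2) (by positivity)
    refine ⟨F₀, fun F hF => ?_⟩
    rw [dist_eq_norm, ← norm_neg, neg_sub]
    refine lt_of_le_of_lt (ContinuousLinearMap.opNorm_le_bound _ (half_pos hε).le fun x => ?_)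
      (half_lt_self hε)
    have hl : Tendsto (fun G : Finset w => ‖∑ i ∈ G, R i x - ∑ i ∈ F, R i x‖) atTop
        (𝓝 ‖P x - ∑ i ∈ F, R i x‖) := ((hR x).sub_const _).norm
    have : (P - ∑ i ∈ F, R i) x = P x - ∑ i ∈ F, R i x := by simp
    rw [this]
    refine le_of_tendsto hl ((eventually_ge_atTop F).mono fun G hG => ?_)
    rw [← Finset.sum_sdiff hG, add_sub_cancel_right]
    refine (hbound _ x).trans ?_
    gcongr
    apply Real.sqrt_le_iff.2 ⟨(half_pos hε).le, ?_⟩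
    have := hF₀ (G \ F) (Finset.disjoint_of_subset_right hF Finset.sdiff_disjoint)
    exact (le_abs_self _).trans this.le
  refine isCompactOperator_of_tendsto htend (Eventually.of_forall fun F => ?_)
  have hsub : ∀ i ∈ F, R i ∈ compactOperator (RingHom.id ℝ) H H := fun i _ => by
    have : IsCompactOperator
        ((ContinuousLinearMap.toSpanSingleton ℝ (P (b i))).comp (innerSL ℝ (b i))) :=
      IsCompactOperator.comp_clm (isCompactOperator_of_locallyCompactSpace_rng
        (ContinuousLinearMap.toSpanSingleton ℝ (P (b i)))) _
    exact this
  exact (compactOperator (RingHom.id ℝ) H H).sum_mem hsub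

/-- If a compact operator `P` commutes with a semigroup of isometries `V`, then every point `P g`
of its range is recurrent. The orbit of `P g` has a convergent subsequence, so `V m (P g)` and
`V (m + n) (P g)` are close for some `m` and some large `n`, and `V m` is an isometry. -/
lemma exists_ultrafilter_tendsto_self (V : ℕ → H →ₗᵢ[ℝ] H)
    (hV : ∀ m n f, V (m + n) f = V m (V n f)) (P : H →L[ℝ] H) (hP : IsCompactOperator P)
    (hcomm : ∀ n f, V n (P f) = P (V n f)) (g : H) :
    ∃ p : Ultrafilter ℕ, (p : Filter ℕ) ≤ atTop ∧
      Tendsto (fun n => V n (P g)) p (𝓝 (P g)) := by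
  refine mapClusterPt_iff_ultrafilter.1
    (Metric.nhds_basis_ball.mapClusterPt_iff_frequently.2 fun ε hε => ?_)
  rw [frequently_atTop]
  intro N
  -- Passing to multiples of `N + 1` makes every positive return time exceed `N`.
  have hK := IsCompactOperator.isCompact_closure_image_closedBall (f := (P : H →ₗ[ℝ] H)) hP ‖g‖
  obtain ⟨a, -, ψ, hψ, ha⟩ := hK.tendsto_subseq (x := fun i => V (i * (N + 1)) (P g)) fun i => by
    apply subset_closure
    exact ⟨V (i * (N + 1)) g, by simp, (hcomm _ _).symm⟩
  obtain ⟨M, hM⟩ := Metric.cauchySeq_iff'.1 ha.cauchySeq ε hε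
  have h1 := hM (M + 1) (by omega)
  have hlt : ψ M < ψ (M + 1) := hψ (by omega)
  obtain ⟨d, hd⟩ := Nat.exists_eq_add_of_lt hlt
  refine ⟨(d + 1) * (N + 1), by nlinarith, ?_⟩
  simp only [Function.comp] at h1
  have : ψ (M + 1) * (N + 1) = ψ M * (N + 1) + (d + 1) * (N + 1) := by rw [hd]; ring
  rw [this, hV, (V _).isometry.dist_eq] at h1
  exact h1
end Hilbert

/-! ### Rigid sets and recurrent functions -/

section Ornstein
open Topology symmDiff
variable {Ω : Type*} [MeasurableSpace Ω]

/-- `limsup μ(A ∩ S⁻ⁿB) ≤ D μ(A) μ(B)` for all measurable sets `A` and `B`, with the limsup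
spelled out through `ε`. -/
def AsympDominated (μ : Measure Ω) (S : Ω → Ω) (D : ℝ) : Prop :=
  ∀ A B : Set Ω, MeasurableSet A → MeasurableSet B → ∀ ε > 0,
    ∀ᶠ n in atTop, μ.real (A ∩ S^[n] ⁻¹' B) ≤ D * μ.real A * μ.real B + ε

/-- The set `A` is rigid along the filter `p` of times: `μ(A ∆ S⁻ⁿA) → 0` along `p`. -/
def RigidAlong (μ : Measure Ω) (S : Ω → Ω) (p : Filter ℕ) (A : Set Ω) : Prop :=
  Tendsto (fun n => μ.real (A ∆ (S^[n] ⁻¹' A))) p (𝓝 0)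

variable {μ : Measure Ω} {S : Ω → Ω} {D : ℝ}

/-- The `n`-th power `f ↦ f ∘ Sⁿ` of the Koopman operator, as an isometry of `L²(μ)`. -/
noncomputable def koopman (hS : MeasurePreserving S μ μ) (n : ℕ) : Lp ℝ 2 μ →ₗᵢ[ℝ] Lp ℝ 2 μ :=
  Lp.compMeasurePreservingₗᵢ ℝ (S^[n]) (hS.iterate n)

lemma koopman_coeFn (hS : MeasurePreserving S μ μ) (n : ℕ) (f : Lp ℝ 2 μ) :
    koopman hS n f =ᵐ[μ] f ∘ S^[n] :=
  Lp.coeFn_compMeasurePreserving f (hS.iterate n)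

lemma koopman_add (hS : MeasurePreserving S μ μ) (m n : ℕ) (f : Lp ℝ 2 μ) :
    koopman hS (m + n) f = koopman hS m (koopman hS n f) := by
  apply Lp.ext
  have h := (hS.iterate m).quasiMeasurePreserving.ae_eq_comp (koopman_coeFn hS n f)
  refine (koopman_coeFn hS _ f).trans (.trans ?_ ((koopman_coeFn hS m _).trans h).symm)
  rw [Function.comp_assoc, ← Function.iterate_add, add_comm]

variable [IsProbabilityMeasure μ]

lemma RigidAlong.measure_le {p : Filter ℕ} [p.NeBot] (hp : p ≤ atTop)
    (hD : AsympDominated μ S D) {A : Set Ω} (hA : MeasurableSet A) (hr : RigidAlong μ S p A) :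
    μ.real A ≤ D * μ.real A * μ.real A := by
  refine le_of_forall_pos_le_add fun ε hε => ?_
  have h1 := (hD A A hA hA (ε / 2) (half_pos hε)).filter_mono hp
  have h2 : ∀ᶠ n in p, μ.real (A ∆ (S^[n] ⁻¹' A)) < ε / 2 :=
    hr.eventually (gt_mem_nhds (half_pos hε))
  obtain ⟨n, h1, h2⟩ := (h1.and h2).exists
  have h3 : μ.real A ≤ μ.real (A ∩ S^[n] ⁻¹' A) + μ.real (A ∆ (S^[n] ⁻¹' A)) := by
    refine (measureReal_mono ?_ (measure_ne_top _ _)).trans (measureReal_union_le _ _)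
    intro x hx
    by_cases h : x ∈ S^[n] ⁻¹' A
    · exact Or.inl ⟨hx, h⟩
    · exact Or.inr (Or.inl ⟨hx, h⟩)
  linarith

lemma RigidAlong.symmDiff_preimage {p : Filter ℕ} (hS : MeasurePreserving S μ μ) {A : Set Ω}
    (hA : MeasurableSet A) (hr : RigidAlong μ S p A) (k : ℕ) :
    RigidAlong μ S p (A ∆ (S^[k] ⁻¹' A)) := by
  have hr2 := hr.const_mul 2
  rw [mul_zero] at hr2
  refine squeeze_zero (fun _ => measureReal_nonneg) (fun n => ?_) hr2
  have heq : (A ∆ (S^[k] ⁻¹' A)) ∆ (S^[n] ⁻¹' (A ∆ (S^[k] ⁻¹' A)))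
      = (A ∆ (S^[n] ⁻¹' A)) ∆ (S^[k] ⁻¹' (A ∆ (S^[n] ⁻¹' A))) := by
    have hc : S^[n] ⁻¹' (S^[k] ⁻¹' A) = S^[k] ⁻¹' (S^[n] ⁻¹' A) := by
      rw [← Set.preimage_comp, ← Set.preimage_comp, ← Function.iterate_add,
        ← Function.iterate_add, add_comm]
    rw [Set.preimage_symmDiff, Set.preimage_symmDiff, hc, symmDiff_symmDiff_symmDiff_comm]
  rw [heq]
  have hm : MeasurableSet (A ∆ (S^[n] ⁻¹' A)) := hA.symmDiff ((hS.measurable.iterate n) hA)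
  calc _ ≤ μ.real ((A ∆ (S^[n] ⁻¹' A)) ∪ (S^[k] ⁻¹' (A ∆ (S^[n] ⁻¹' A)))) :=
        measureReal_mono Set.symmDiff_subset_union (measure_ne_top _ _)
    _ ≤ _ := measureReal_union_le _ _
    _ = _ := by rw [(hS.iterate k).measureReal_preimage hm.nullMeasurableSet]; ring

/-- Rigid sets are null or conull. Choose `k ≥ 1` with `μ(A ∆ S⁻ᵏA)` less than `1 / (|D| + 1)`. This
difference is itself rigid, so `RigidAlong.measure_le` forces it to be null, and ergodicity of `Sᵏ`
applies to `A`. -/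
lemma RigidAlong.trivial {p : Filter ℕ} [p.NeBot] (hp : p ≤ atTop) (hS : MeasurePreserving S μ μ)
    (hte : IsTotallyErgodic μ S)
    (hD : AsympDominated μ S D) {A : Set Ω} (hA : MeasurableSet A) (hr : RigidAlong μ S p A) :
    (∀ᵐ x ∂μ, x ∈ A) ∨ ∀ᵐ x ∂μ, x ∉ A := by
  have h2 : ∀ᶠ n in p, μ.real (A ∆ (S^[n] ⁻¹' A)) < 1 / (|D| + 1) :=
    hr.eventually (gt_mem_nhds (by positivity))
  obtain ⟨k, hk1, hk⟩ := ((eventually_ge_atTop 1).filter_mono hp |>.and h2).exists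
  have hm : MeasurableSet (A ∆ (S^[k] ⁻¹' A)) := hA.symmDiff ((hS.measurable.iterate k) hA)
  have h3 := (hr.symmDiff_preimage hS hA k).measure_le hp hD hm
  set b := μ.real (A ∆ (S^[k] ⁻¹' A)) with hb
  have hb0 : 0 ≤ b := measureReal_nonneg
  have hb1 : b = 0 := by
    by_contra hne
    have hpos : 0 < b := lt_of_le_of_ne hb0 (Ne.symm hne)
    rw [lt_div_iff₀ (by positivity)] at hk
    have : D * b * b ≤ |D| * b * b := by gcongr; exact le_abs_self D
    nlinarith
  have h0 : μ (A ∆ (S^[k] ⁻¹' A)) = 0 := by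
    rwa [hb, measureReal_eq_zero_iff] at hb1
  have hae : (S^[k] ⁻¹' A : Set Ω) =ᵐ[μ] A := (measure_symmDiff_eq_zero_iff.1 h0).symm
  rcases (hte k hk1).quasiErgodic.ae_empty_or_univ₀ hA.nullMeasurableSet hae with h | h
  · exact Or.inr (by filter_upwards [h.mem_iff] with x hx using fun h => (hx.1 h))
  · exact Or.inl (by filter_upwards [h.mem_iff] with x hx using hx.2 (Set.mem_univ x))

/-- Functions that are recurrent under the Koopman operator are almost everywhere constant, because
their sublevel sets are rigid. -/
lemma ae_const_of_tendsto_koopman {p : Filter ℕ} [p.NeBot] (hp : p ≤ atTop)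
    (hS : MeasurePreserving S μ μ) (hte : IsTotallyErgodic μ S)
    (hD : AsympDominated μ S D) (f : Lp ℝ 2 μ)
    (hf : Tendsto (fun n => koopman hS n f) p (𝓝 f)) : ∃ c, ∀ᵐ x ∂μ, f x = c := by
  have hfm : Measurable f := (Lp.stronglyMeasurable f).measurable
  have hmeas := tendstoInMeasure_of_tendsto_Lp hf
  -- Rigidity of `{f < t}` needs `t` not to be an atom of the distribution of `f`: the symmetric
  -- difference is covered by `{|f ∘ Sⁿ - f| ≥ δ}` and `{|f - t| ≤ δ}`.
  have hgood : ∀ t, μ {x | f x = t} = 0 → (∀ᵐ x ∂μ, f x < t) ∨ ∀ᵐ x ∂μ, ¬ f x < t := by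
    intro t ht
    refine RigidAlong.trivial (A := {x | f x < t}) hp hS hte hD
      (measurableSet_lt hfm measurable_const) ?_
    have hlevel : Tendsto (fun δ : ℝ => μ.real {x | |f x - t| ≤ δ}) (𝓝[>] 0) (𝓝 0) := by
      have := tendsto_measure_biInter_gt (μ := μ) (s := fun δ : ℝ => {x | |f x - t| ≤ δ}) (a := 0)
        (fun r _ => (measurableSet_le (by fun_prop) measurable_const).nullMeasurableSet)
        (fun i j _ hij x hx => le_trans hx hij) ⟨1, one_pos, measure_ne_top _ _⟩
      have hset : (⋂ r, ⋂ (_ : r > (0 : ℝ)), {x | |f x - t| ≤ r}) = {x | f x = t} := by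
        ext x
        simp only [Set.mem_iInter, Set.mem_ofPred_eq]
        constructor
        · intro h
          have : |f x - t| ≤ 0 := le_of_forall_gt_imp_ge_of_dense h
          linarith [abs_nonpos_iff.1 this]
        · rintro rfl r hr; simpa using hr.le
      rw [hset, ht] at this
      exact (ENNReal.tendsto_toReal ENNReal.zero_ne_top).comp this
    rw [RigidAlong, Metric.tendsto_nhds]
    intro ε hε
    obtain ⟨δ, hδ, hδ0⟩ := ((hlevel.eventually (gt_mem_nhds (half_pos hε))).and
      self_mem_nhdsWithin).exists
    have h1 := (tendstoInMeasure_iff_measureReal_norm.1 hmeas δ hδ0).eventually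
      (gt_mem_nhds (half_pos hε))
    filter_upwards [h1] with n hn
    rw [Real.dist_0_eq_abs, abs_of_nonneg measureReal_nonneg]
    have hsub : μ.real ({x | f x < t} ∆ (S^[n] ⁻¹' {x | f x < t})) ≤
        μ.real ({x | δ ≤ ‖koopman hS n f x - f x‖} ∪ {x | |f x - t| ≤ δ}) := by
      refine ENNReal.toReal_mono (measure_ne_top _ _) (measure_mono_ae ?_)
      filter_upwards [koopman_coeFn hS n f] with x hx hmem
      simp only [Function.comp] at hx
      by_contra hcon
      have hc1 : ‖koopman hS n f x - f x‖ < δ := not_le.1 fun h => hcon (Or.inl h)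
      have hc2 : δ < |f x - t| := not_le.1 fun h => hcon (Or.inr h)
      rw [hx, Real.norm_eq_abs, abs_lt] at hc1
      rcases hmem with ⟨h1, h2⟩ | ⟨h1, h2⟩
      · simp only [Set.mem_preimage, Set.mem_ofPred_eq, not_lt] at h1 h2
        rw [abs_of_neg (by linarith)] at hc2
        linarith
      · simp only [Set.mem_preimage, Set.mem_ofPred_eq, not_lt] at h1 h2
        rw [abs_of_nonneg (by linarith)] at hc2
        linarith
    have := measureReal_union_le (μ := μ) {x | δ ≤ ‖koopman hS n f x - f x‖} {x | |f x - t| ≤ δ}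
    linarith
  -- There are only countably many atoms, so every `t` is a limit from below of non-atoms.
  have hIio : ∀ t, (∀ᵐ x ∂μ, f x < t) ∨ ∀ᵐ x ∂μ, ¬ f x < t := by
    intro t
    have hdense : Dense {t : ℝ | 0 < μ {x | f x = t}}ᶜ :=
      (Measure.countable_meas_level_set_pos hfm).dense_compl ℝ
    obtain ⟨u, -, hu, hlim⟩ := hdense.exists_seq_strictMono_tendsto t
    by_cases hex : ∃ n, ∀ᵐ x ∂μ, f x < u n
    · obtain ⟨n, hn⟩ := hex
      exact Or.inl (hn.mono fun x hx => hx.trans (hu n).1)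
    · refine Or.inr ?_
      have : ∀ n, ∀ᵐ x ∂μ, ¬ f x < u n := fun n =>
        (hgood _ (by simpa using (hu n).2)).resolve_left fun h => hex ⟨n, h⟩
      filter_upwards [ae_all_iff.2 this] with x hx
      exact not_lt.2 (le_of_tendsto' hlim fun n => not_lt.1 (hx n))
  -- The Borel sets with null or conull preimage form a σ-algebra.
  have hborel : ∀ s : Set ℝ, MeasurableSet s → (∀ᵐ x ∂μ, f x ∈ s) ∨ ∀ᵐ x ∂μ, f x ∉ s := by
    intro s hs
    rw [BorelSpace.measurable_eq (α := ℝ), borel_eq_generateFrom_Iio] at hs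
    induction s, hs using MeasurableSpace.generateFrom_induction with
    | hC s hs _ => obtain ⟨t, rfl⟩ := hs; exact hIio t
    | empty => exact Or.inr (by simp)
    | compl s _ ih => simpa [or_comm] using ih
    | iUnion s _ ih =>
      by_cases hex : ∃ n, ∀ᵐ x ∂μ, f x ∈ s n
      · obtain ⟨n, hn⟩ := hex
        exact Or.inl (hn.mono fun x hx => Set.mem_iUnion.2 ⟨n, hx⟩)
      · refine Or.inr ?_
        have : ∀ n, ∀ᵐ x ∂μ, f x ∉ s n := fun n => (ih n).resolve_left fun h => hex ⟨n, h⟩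
        filter_upwards [ae_all_iff.2 this] with x hx
        simpa using hx
  exact exists_eventuallyEq_const_of_forall_separating MeasurableSet hborel

end Ornstein

/-! ### Asymptotic domination and total ergodicity imply mixing -/

section Ornstein2
open Topology symmDiff
variable {Ω : Type*} [MeasurableSpace Ω] {μ : Measure Ω} [IsProbabilityMeasure μ] {S : Ω → Ω}
  {D : ℝ}

/-- The indicator function of a measurable set `A` as an element of `L²(μ)`. -/
noncomputable def ind (μ : Measure Ω) [IsProbabilityMeasure μ] {A : Set Ω} (hA : MeasurableSet A) :
    Lp ℝ 2 μ :=
  indicatorConstLp 2 hA (measure_ne_top μ A) 1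

lemma inner_ind (A : Set Ω) (hA : MeasurableSet A) (f : Lp ℝ 2 μ) :
    inner ℝ (ind μ hA) f = ∫ x in A, f x ∂μ :=
  L2.inner_indicatorConstLp_one hA _ f

lemma inner_ind_koopman (hS : MeasurePreserving S μ μ) (n : ℕ) {A B : Set Ω}
    (hA : MeasurableSet A) (hB : MeasurableSet B) :
    inner ℝ (ind μ hA) (koopman hS n (ind μ hB)) = μ.real (A ∩ S^[n] ⁻¹' B) := by
  have : koopman hS n (ind μ hB) = ind μ ((hS.iterate n).measurable hB) :=
    Lp.indicatorConstLp_compMeasurePreserving hB _ 1 (hS.iterate n)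
  rw [this]
  exact L2.real_inner_indicatorConstLp_one_indicatorConstLp_one _ _

lemma inner_univ_abs_le (u : Lp ℝ 2 μ) :
    inner ℝ (ind μ MeasurableSet.univ) |u| ≤ ‖u‖ := by
  refine (real_inner_le_norm _ _).trans ?_
  rw [norm_abs_eq_norm]
  have : ‖ind μ MeasurableSet.univ‖ = 1 := by
    rw [ind, norm_indicatorConstLp (by simp) (by simp)]; simp
  rw [this, one_mul]

variable {U : Filter ℕ} [U.NeBot] {P : Lp ℝ 2 μ →L[ℝ] Lp ℝ 2 μ}

/-- Integrated form of the bound `|P u| ≤ D ∫ |u|`. For `u` an indicator function it is the limit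
of the domination hypothesis; it extends to simple functions because it is additive over functions
with disjoint supports, and to `L²` by continuity. -/
lemma abs_inner_ind_le (hU : U ≤ atTop) (hS : MeasurePreserving S μ μ) (hD : AsympDominated μ S D)
    (hP : ∀ f g, Tendsto (fun n => inner ℝ f (koopman hS n g)) U (𝓝 (inner ℝ f (P g))))
    {A : Set Ω} (hA : MeasurableSet A) (u : Lp ℝ 2 μ) :
    |inner ℝ (ind μ hA) (P u)| ≤ D * μ.real A * inner ℝ (ind μ MeasurableSet.univ) |u| := by
  induction u using Lp.induction (p := 2) (by simp) with
  | @indicatorConst c B hB hμB =>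
    have hind : ind μ hB =ᵐ[μ] B.indicator fun _ => (1 : ℝ) := indicatorConstLp_coeFn
    have h1 : (Lp.simpleFunc.indicatorConst 2 hB hμB.ne c : Lp ℝ 2 μ) = c • ind μ hB := by
      rw [Lp.simpleFunc.coe_indicatorConst]
      apply Lp.ext
      filter_upwards [hind, Lp.coeFn_smul c (ind μ hB),
        indicatorConstLp_coeFn (p := 2) (hs := hB) (hμs := hμB.ne) (c := c)] with x a1 a2 a3
      rw [a2, a3, Pi.smul_apply, a1]
      by_cases hx : x ∈ B <;> simp [hx]
    have h2 : |c • ind μ hB| = |c| • ind μ hB := by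
      apply Lp.ext
      filter_upwards [hind, Lp.coeFn_smul c (ind μ hB), Lp.coeFn_smul |c| (ind μ hB),
        Lp.coeFn_abs (c • ind μ hB)] with x a1 a2 a3 a4
      rw [a4, a3, a2, Pi.smul_apply, Pi.smul_apply, a1]
      by_cases hx : x ∈ B <;> simp [hx]
    rw [h1, map_smul, inner_smul_right, abs_mul, h2, inner_smul_right]
    have h3 : inner ℝ (ind μ MeasurableSet.univ) (ind μ hB) = μ.real B := by
      rw [ind, ind, L2.real_inner_indicatorConstLp_one_indicatorConstLp_one, Set.univ_inter]
    have h4 := hP (ind μ hA) (ind μ hB)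
    simp only [inner_ind_koopman] at h4
    have h5 : inner ℝ (ind μ hA) (P (ind μ hB)) ≤ D * μ.real A * μ.real B :=
      le_of_forall_pos_le_add fun ε hε =>
        le_of_tendsto h4 ((hD A B hA hB ε hε).filter_mono hU)
    have h6 : 0 ≤ inner ℝ (ind μ hA) (P (ind μ hB)) :=
      ge_of_tendsto' h4 fun _ => measureReal_nonneg
    rw [h3, abs_of_nonneg h6]
    nlinarith [abs_nonneg c, mul_le_mul_of_nonneg_left h5 (abs_nonneg c)]
  | @add f g hf hg hfg h1 h2 =>
    have h3 : |hf.toLp f + hg.toLp g| = |hf.toLp f| + |hg.toLp g| := by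
      apply Lp.ext
      filter_upwards [Lp.coeFn_abs (hf.toLp f + hg.toLp g), Lp.coeFn_add (hf.toLp f) (hg.toLp g),
        Lp.coeFn_add |hf.toLp f| |hg.toLp g|, Lp.coeFn_abs (hf.toLp f), Lp.coeFn_abs (hg.toLp g),
        hf.coeFn_toLp, hg.coeFn_toLp] with x a1 a2 a3 a4 a5 a6 a7
      rw [a1, a2, a3, Pi.add_apply, Pi.add_apply, a4, a5, a6, a7]
      by_cases hx : f x = 0
      · simp [hx]
      · have : g x = 0 := by
          by_contra hgx
          exact Set.disjoint_left.1 hfg hx hgx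
        simp [this]
    rw [h3, map_add, inner_add_right, inner_add_right, mul_add]
    exact (abs_add_le _ _).trans (add_le_add h1 h2)
  | isClosed =>
    refine isClosed_le (by fun_prop) ?_
    have : Continuous fun u : Lp ℝ 2 μ => |u| := continuous_id.sup continuous_neg
    fun_prop

lemma ae_abs_le (hD0 : 0 ≤ D) (hU : U ≤ atTop) (hS : MeasurePreserving S μ μ)
    (hD : AsympDominated μ S D)
    (hP : ∀ f g, Tendsto (fun n => inner ℝ f (koopman hS n g)) U (𝓝 (inner ℝ f (P g))))
    (u : Lp ℝ 2 μ) : ∀ᵐ x ∂μ, |P u x| ≤ D * ‖u‖ := by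
  have hint : Integrable (P u) μ := (Lp.memLp (P u)).integrable (by norm_num)
  have hb : ∀ A, MeasurableSet A → |∫ x in A, P u x ∂μ| ≤ D * ‖u‖ * μ.real A := by
    intro A hA
    rw [← inner_ind A hA]
    refine (abs_inner_ind_le hU hS hD hP hA u).trans ?_
    have := mul_le_mul_of_nonneg_left (inner_univ_abs_le u)
      (mul_nonneg hD0 (measureReal_nonneg (μ := μ) (s := A)))
    linarith
  have h1 := ae_le_of_forall_setIntegral_le hint (integrable_const (D * ‖u‖)) fun A hA _ => by
    rw [setIntegral_const, smul_eq_mul, mul_comm]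
    exact (abs_le.1 (hb A hA)).2
  have h2 := ae_le_of_forall_setIntegral_le (integrable_const (-(D * ‖u‖))) hint fun A hA _ => by
    rw [setIntegral_const, smul_eq_mul, mul_comm]
    linarith [(abs_le.1 (hb A hA)).1]
  filter_upwards [h1, h2] with x h1 h2 using abs_le.2 ⟨h2, h1⟩

/-- The weak limit `P` is Hilbert–Schmidt. For almost every `x` the bound
`|∑ c_e (P e)(x)| ≤ D ‖c‖` holds for all coefficient vectors `c`, first on a countable dense set;
taking `c_e = (P e)(x)` gives `∑ (P e)(x)² ≤ D²`, which is then integrated. -/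
lemma sum_norm_sq_le (hD0 : 0 ≤ D) (hU : U ≤ atTop) (hS : MeasurePreserving S μ μ)
    (hD : AsympDominated μ S D)
    (hP : ∀ f g, Tendsto (fun n => inner ℝ f (koopman hS n g)) U (𝓝 (inner ℝ f (P g))))
    (s : Finset (Lp ℝ 2 μ)) (hs : Orthonormal ℝ ((↑) : s → Lp ℝ 2 μ)) :
    ∑ e ∈ s, ‖P e‖ ^ 2 ≤ D ^ 2 := by
  have hc : ∀ c : EuclideanSpace ℝ s, ∀ᵐ x ∂μ, |∑ e, c e * P e x| ≤ D * ‖c‖ := by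
    intro c
    have hn : ‖∑ e : s, c e • (e : Lp ℝ 2 μ)‖ = ‖c‖ := by
      rw [← sq_eq_sq₀ (norm_nonneg _) (norm_nonneg _), ← real_inner_self_eq_norm_sq,
        hs.inner_sum, EuclideanSpace.norm_sq_eq]
      simp [sq]
    have h1 := ae_abs_le hD0 hU hS hD hP (∑ e : s, c e • (e : Lp ℝ 2 μ))
    rw [hn, map_sum] at h1
    have h2 : ∀ᵐ x ∂μ, ∀ e : s, (c e • P e : Lp ℝ 2 μ) x = c e * P e x :=
      ae_all_iff.2 fun e => (Lp.coeFn_smul (c e) (P e)).mono fun x hx => hx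
    have h3 := Lp.coeFn_fun_finsetSum Finset.univ fun e : s => (c e • P e : Lp ℝ 2 μ)
    simp only [map_smul] at h1
    filter_upwards [h1, h2, h3] with x h1 h2 h3
    rw [h3] at h1
    simpa only [h2] using h1
  obtain ⟨Q, hQc, hQd⟩ := TopologicalSpace.exists_countable_dense (EuclideanSpace ℝ s)
  have hall : ∀ᵐ x ∂μ, ∀ c ∈ Q, |∑ e, c e * P e x| ≤ D * ‖c‖ :=
    (ae_ball_iff hQc).2 fun c _ => hc c
  have hpt : ∀ᵐ x ∂μ, ∑ e : s, (P e x) ^ 2 ≤ D ^ 2 := by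
    filter_upwards [hall] with x hx
    have hcl : IsClosed {c : EuclideanSpace ℝ s | |∑ e, c e * P e x| ≤ D * ‖c‖} :=
      isClosed_le (by fun_prop) (by fun_prop)
    have hcx : ∀ c : EuclideanSpace ℝ s, |∑ e, c e * P e x| ≤ D * ‖c‖ := fun c =>
      closure_minimal hx hcl (hQd c)
    have h1 := hcx (WithLp.toLp 2 fun e => P e x)
    have h2 := EuclideanSpace.norm_sq_eq (WithLp.toLp 2 fun e : s => P e x)
    set N := ‖(WithLp.toLp 2 fun e : s => P e x)‖ with hN
    simp only [Real.norm_eq_abs, sq_abs] at h2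
    simp only [← sq] at h1
    rw [← h2] at h1 ⊢
    rw [abs_of_nonneg (sq_nonneg _)] at h1
    have hN0 : 0 ≤ N := norm_nonneg _
    have : N ≤ D := by
      rcases hN0.eq_or_lt with h | h
      · rw [← h]; exact hD0
      · nlinarith
    gcongr
  have hsq : ∀ e : s, ‖P e‖ ^ 2 = ∫ x, (P e x) ^ 2 ∂μ := fun e => by
    rw [← real_inner_self_eq_norm_sq, L2.inner_def]
    simp [sq]
  rw [← Finset.sum_coe_sort]
  simp only [hsq]
  have hint : ∀ e ∈ (Finset.univ : Finset s), Integrable (fun x => (P (e : Lp ℝ 2 μ) x) ^ 2) μ :=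
    fun e _ => (Lp.memLp (P (e : Lp ℝ 2 μ))).integrable_sq
  rw [← integral_finsetSum _ hint]
  calc _ ≤ ∫ _, D ^ 2 ∂μ := integral_mono_ae
        (integrable_finsetSum _ hint)
        (integrable_const _) hpt
    _ = D ^ 2 := by simp

/-- A totally ergodic measure-preserving map with `limsup μ(A ∩ S⁻ⁿB) ≤ D μ(A) μ(B)` is mixing. -/
theorem isMixing_of_asympDominated (hD0 : 0 ≤ D) (hS : MeasurePreserving S μ μ)
    (hte : IsTotallyErgodic μ S) (hD : AsympDominated μ S D) : IsMixing μ S := by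
  intro A B hA hB
  suffices h : Tendsto (fun n => μ.real (B ∩ S^[n] ⁻¹' A)) atTop (𝓝 (μ.real A * μ.real B)) by
    have h2 := ENNReal.tendsto_ofReal h
    rw [ENNReal.ofReal_mul measureReal_nonneg, ofReal_measureReal, ofReal_measureReal] at h2
    refine h2.congr fun n => ?_
    rw [ofReal_measureReal, Set.inter_comm]
  rw [tendsto_iff_ultrafilter]
  intro U hU
  obtain ⟨P, hP⟩ := exists_weakLimit (koopman hS) U
  have hcompact := isCompactOperator_of_sum_norm_sq_le P (D ^ 2)
    (sum_norm_sq_le hD0 hU hS hD hP)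
  have hcomm : ∀ n f, koopman hS n (P f) = P (koopman hS n f) := by
    intro n f
    refine ext_inner_left ℝ fun v => ?_
    let W := (koopman hS n).toContinuousLinearMap
    have h1 : inner ℝ v (koopman hS n (P f)) = inner ℝ (W.adjoint v) (P f) := by
      rw [ContinuousLinearMap.adjoint_inner_left]; rfl
    rw [h1]
    refine tendsto_nhds_unique (hP (W.adjoint v) f) ((hP v (koopman hS n f)).congr fun m => ?_)
    rw [ContinuousLinearMap.adjoint_inner_left]
    change _ = inner ℝ v (koopman hS n (koopman hS m f))
    rw [← koopman_add, ← koopman_add, add_comm]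
  obtain ⟨p, hp, hpt⟩ := exists_ultrafilter_tendsto_self (koopman hS) (koopman_add hS) P hcompact
    hcomm (ind μ hA)
  obtain ⟨c, hc⟩ := ae_const_of_tendsto_koopman hp hS hte hD _ hpt
  have hval : ∀ (E : Set Ω) (hE : MeasurableSet E),
      inner ℝ (ind μ hE) (P (ind μ hA)) = μ.real E * c := by
    intro E hE
    rw [inner_ind, setIntegral_congr_ae hE (hc.mono fun x hx _ => hx), setIntegral_const,
      smul_eq_mul]
  have hlim := hP (ind μ hB) (ind μ hA)
  have hlim1 := hP (ind μ MeasurableSet.univ) (ind μ hA)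
  simp only [inner_ind_koopman, hval, Set.univ_inter] at hlim hlim1
  -- The constant is identified by testing against the function `1`.
  have hcA : c = μ.real A := by
    refine tendsto_nhds_unique (a := c) (by simpa using hlim1)
      (tendsto_const_nhds.congr fun n => ?_)
    rw [(hS.iterate n).measureReal_preimage hA.nullMeasurableSet]
  rw [hcA, mul_comm] at hlim
  exact hlim

end Ornstein2

/-! ### Gibbs measures are asymptotically dominated -/

section Gibbs
open Topology symmDiff

/-- The word `x_0 … x_{n-1}` read off from the first `n` nonnegative coordinates of `x`. -/
def word (n : ℕ) (x : SigmaSFT q T) : Fin n → Fin q := fun k => x.1 (k : ℕ)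

lemma shiftSFT_iterate (n : ℕ) (x : SigmaSFT q T) (i : ℤ) :
    (shiftSFT^[n] x).1 i = x.1 (i + n) := by
  induction n generalizing x with
  | zero => simp
  | succ n ih =>
    rw [Function.iterate_succ_apply, ih]
    exact congrArg x.1 (by push_cast; ring)

lemma measurable_word (n : ℕ) : Measurable (word (T := T) n) :=
  measurable_pi_iff.2 fun k => (measurable_pi_apply (k : ℤ)).comp measurable_subtype_coe

lemma cylinder_ofFn (n : ℕ) (w : Fin n → Fin q) :
    cylinder (T := T) (List.ofFn w) = word n ⁻¹' {w} := by
  ext x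
  constructor
  · intro h
    funext k
    simpa [word] using h k (by simp)
  · rintro rfl k hk
    simp [word]

lemma isAdmissible_ofFn_word {n : ℕ} (hn : 1 ≤ n) (x : SigmaSFT q T) :
    IsAdmissible T (List.ofFn (word n x)) := by
  refine ⟨by simpa using (by omega : n ≠ 0), ?_⟩
  refine List.isChain_iff_getElem.2 ?_
  intro i hi
  simpa [word] using x.2 i

variable {μ : Measure (SigmaSFT q T)} [IsProbabilityMeasure μ] {φ : ℕ → SigmaSFT q T → ℝ} {C : ℝ}

/-- The density `e^{-nP(Φ)} φ_n(x)` against which the Gibbs property compares the measure of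
a cylinder. -/
noncomputable def gibbsWeight (φ : ℕ → SigmaSFT q T → ℝ) (n : ℕ) (x : SigmaSFT q T) : ℝ :=
  Real.exp (-(n : ℝ) * pressure distSFT shiftSFT φ) * φ n x

lemma gibbsWeight_pos (hφ : IsSubadditivePotential shiftSFT φ) (n : ℕ) (x : SigmaSFT q T) :
    0 < gibbsWeight φ n x := mul_pos (Real.exp_pos _) (hφ.2.1 n x)

lemma gibbsWeight_add_le (hφ : IsSubadditivePotential shiftSFT φ) {m n : ℕ} (hm : 1 ≤ m)
    (hn : 1 ≤ n) (x : SigmaSFT q T) :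
    gibbsWeight φ (m + n) x ≤ gibbsWeight φ m x * gibbsWeight φ n (shiftSFT^[m] x) := by
  have h1 := hφ.2.2 m n hm hn x
  rw [← Real.log_mul (hφ.2.1 _ _).ne' (hφ.2.1 _ _).ne',
    Real.log_le_log_iff (hφ.2.1 _ _) (mul_pos (hφ.2.1 _ _) (hφ.2.1 _ _))] at h1
  have h2 : Real.exp (-((m + n : ℕ) : ℝ) * pressure distSFT shiftSFT φ)
      = Real.exp (-(m : ℝ) * pressure distSFT shiftSFT φ)
        * Real.exp (-(n : ℝ) * pressure distSFT shiftSFT φ) := by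
    rw [← Real.exp_add]
    congr 1
    push_cast
    ring
  unfold gibbsWeight
  rw [h2, mul_mul_mul_comm]
  gcongr

/-- The Gibbs property for the cylinder of length `n` around `x`, in terms of real numbers. -/
lemma gibbs_bounds (hC : 1 ≤ C) (hφ : IsSubadditivePotential shiftSFT φ)
    (hG : HasGibbsProperty φ μ C) {n : ℕ} (hn : 1 ≤ n) (x : SigmaSFT q T) :
    gibbsWeight φ n x ≤ C * μ.real (word n ⁻¹' {word n x}) ∧
      μ.real (word n ⁻¹' {word n x}) ≤ C * gibbsWeight φ n x := by
  have h := hG _ (isAdmissible_ofFn_word hn x) x (by rw [cylinder_ofFn]; rfl)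
  rw [cylinder_ofFn, List.length_ofFn] at h
  have hC0 : 0 < C := by linarith
  constructor
  · have h1 := (ENNReal.ofReal_le_iff_le_toReal (measure_ne_top _ _)).1 h.1
    rwa [inv_mul_le_iff₀ hC0] at h1
  · exact ENNReal.toReal_le_of_le_ofReal (mul_pos hC0 (gibbsWeight_pos hφ n x)).le h.2

/-- The estimate `μ[IKJ] ≤ C⁴ μ[I] μ[K] μ[J]`: one factor `C` from the upper Gibbs bound for `IKJ`
and three from the lower Gibbs bounds for `I`, `K`, `J`, combined by subadditivity. -/
lemma measure_three_words_le (hC : 1 ≤ C) (hφ : IsSubadditivePotential shiftSFT φ)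
    (hG : HasGibbsProperty φ μ C) {m l : ℕ} (hm : 1 ≤ m) (hl : 1 ≤ l)
    (I J : Fin m → Fin q) (K : Fin l → Fin q) :
    μ.real {x | word m x = I ∧ word l (shiftSFT^[m] x) = K ∧ word m (shiftSFT^[m + l] x) = J}
      ≤ C ^ 4 * μ.real (word m ⁻¹' {I}) * μ.real (word l ⁻¹' {K}) * μ.real (word m ⁻¹' {J}) := by
  have hC0 : 0 < C := by linarith
  -- Gibbs bounds are only available around points, so the empty cylinder is treated apart.
  rcases Set.eq_empty_or_nonempty
    {x : SigmaSFT q T | word m x = I ∧ word l (shiftSFT^[m] x) = K ∧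
      word m (shiftSFT^[m + l] x) = J} with he | ⟨x, hI, hK, hJ⟩
  · rw [he, measureReal_empty]
    positivity
  have hsub : {x : SigmaSFT q T | word m x = I ∧ word l (shiftSFT^[m] x) = K ∧
      word m (shiftSFT^[m + l] x) = J} ⊆ word (m + l + m) ⁻¹' {word (m + l + m) x} := by
    rintro y ⟨hI', hK', hJ'⟩
    funext k
    change y.1 (k : ℕ) = x.1 (k : ℕ)
    rcases lt_or_ge (k : ℕ) m with h | h
    · exact congrFun (hI'.trans hI.symm) ⟨k, h⟩
    rcases lt_or_ge (k : ℕ) (m + l) with h2 | h2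
    · have := congrFun (hK'.trans hK.symm) ⟨k - m, by omega⟩
      simp only [word, shiftSFT_iterate] at this
      rwa [show (((k : ℕ) - m : ℕ) : ℤ) + m = (k : ℕ) by omega] at this
    · have := congrFun (hJ'.trans hJ.symm) ⟨k - (m + l), by omega⟩
      simp only [word, shiftSFT_iterate] at this
      rwa [show (((k : ℕ) - (m + l) : ℕ) : ℤ) + (m + l : ℕ) = (k : ℕ) by omega] at this
  have g1 := gibbs_bounds hC hφ hG (n := m + l + m) (by omega) x
  have g2 := (gibbs_bounds hC hφ hG hm x).1
  have g3 := (gibbs_bounds hC hφ hG hl (shiftSFT^[m] x)).1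
  have g4 := (gibbs_bounds hC hφ hG hm (shiftSFT^[m + l] x)).1
  rw [hI] at g2
  rw [hK] at g3
  rw [hJ] at g4
  have s1 := gibbsWeight_add_le hφ (m := m + l) (by omega) hm x
  have s2 := gibbsWeight_add_le hφ hm hl x
  have p1 := (gibbsWeight_pos hφ m x).le
  have p2 := (gibbsWeight_pos hφ l (shiftSFT^[m] x)).le
  have p3 := (gibbsWeight_pos hφ m (shiftSFT^[m + l] x)).le
  calc _ ≤ μ.real (word (m + l + m) ⁻¹' {word (m + l + m) x}) :=
        measureReal_mono hsub (measure_ne_top _ _)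
    _ ≤ C * gibbsWeight φ (m + l + m) x := g1.2
    _ ≤ C * (gibbsWeight φ m x * gibbsWeight φ l (shiftSFT^[m] x)
          * gibbsWeight φ m (shiftSFT^[m + l] x)) := by
        gcongr
        exact s1.trans (by gcongr)
    _ ≤ C * ((C * μ.real (word m ⁻¹' {I})) * (C * μ.real (word l ⁻¹' {K}))
          * (C * μ.real (word m ⁻¹' {J}))) := by gcongr
    _ = _ := by ring

/-- The words of a fixed length induce a finite measurable partition. -/
lemma measureReal_eq_sum_word {n : ℕ} (a : Finset (Fin n → Fin q)) :
    μ.real (word n ⁻¹' (a : Set (Fin n → Fin q))) = ∑ w ∈ a, μ.real (word n ⁻¹' {w}) := by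
  rw [← measureReal_biUnion_finset]
  · congr 1
    ext x
    simp
  · intro v _ w _ hvw
    exact Disjoint.preimage _ (by simpa using hvw)
  · exact fun w _ => measurable_word n (measurableSet_singleton w)

/-- The domination bound for unions of cylinders of length `m`, obtained by summing the three-word
estimate over the words `K` of length `n - m` filling the gap. -/
lemma measure_inter_preimage_word_le (hC : 1 ≤ C) (hφ : IsSubadditivePotential shiftSFT φ)
    (hG : HasGibbsProperty φ μ C) {m n : ℕ} (hm : 1 ≤ m) (hn : m < n)
    (a b : Set (Fin m → Fin q)) :
    μ.real (word m ⁻¹' a ∩ shiftSFT^[n] ⁻¹' (word m ⁻¹' b))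
      ≤ C ^ 4 * μ.real (word m ⁻¹' a) * μ.real (word m ⁻¹' b) := by
  classical
  obtain ⟨l, rfl⟩ := Nat.exists_eq_add_of_lt hn
  rw [add_assoc]
  lift a to Finset (Fin m → Fin q) using a.toFinite
  lift b to Finset (Fin m → Fin q) using b.toFinite
  have hsub : (word m ⁻¹' (a : Set (Fin m → Fin q)) ∩
      shiftSFT^[m + (l + 1)] ⁻¹' (word m ⁻¹' (b : Set (Fin m → Fin q))) : Set (SigmaSFT q T)) ⊆
      ⋃ I ∈ a, ⋃ J ∈ b, ⋃ K ∈ (Finset.univ : Finset (Fin (l + 1) → Fin q)),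
        {x | word m x = I ∧ word (l + 1) (shiftSFT^[m] x) = K ∧
          word m (shiftSFT^[m + (l + 1)] x) = J} := by
    rintro x ⟨h1, h2⟩
    simp only [Set.mem_iUnion]
    exact ⟨_, h1, _, h2, _, Finset.mem_univ _, rfl, rfl, rfl⟩
  have htot : ∑ K : Fin (l + 1) → Fin q, μ.real (word (T := T) (l + 1) ⁻¹' {K}) = 1 := by
    rw [← measureReal_eq_sum_word]
    simp
  calc _ ≤ μ.real _ := measureReal_mono hsub (measure_ne_top _ _)
    _ ≤ ∑ I ∈ a, ∑ J ∈ b, ∑ K : Fin (l + 1) → Fin q,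
          μ.real {x | word m x = I ∧ word (l + 1) (shiftSFT^[m] x) = K ∧
            word m (shiftSFT^[m + (l + 1)] x) = J} := by
        refine (measureReal_biUnion_finset_le _ _).trans (Finset.sum_le_sum fun I _ => ?_)
        refine (measureReal_biUnion_finset_le _ _).trans (Finset.sum_le_sum fun J _ => ?_)
        exact measureReal_biUnion_finset_le _ _
    _ ≤ ∑ I ∈ a, ∑ J ∈ b, ∑ K : Fin (l + 1) → Fin q, C ^ 4 * μ.real (word m ⁻¹' {I})
          * μ.real (word (l + 1) ⁻¹' {K}) * μ.real (word m ⁻¹' {J}) := by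
        gcongr with I _ J _ K _
        exact measure_three_words_le hC hφ hG hm (by omega) I J K
    _ = _ := by
        simp only [← Finset.sum_mul, ← Finset.mul_sum, htot, mul_one]
        rw [measureReal_eq_sum_word, measureReal_eq_sum_word]

/-- Membership in the set `A` depends only on the coordinates `x_i` with `|i| ≤ N`. -/
def DependsOnWindow (N : ℕ) (A : Set (SigmaSFT q T)) : Prop :=
  ∀ x y : SigmaSFT q T, (∀ i : ℤ, |i| ≤ N → x.1 i = y.1 i) → x ∈ A → y ∈ A

lemma DependsOnWindow.mono {M N : ℕ} (h : M ≤ N) {A : Set (SigmaSFT q T)}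
    (hA : DependsOnWindow M A) : DependsOnWindow N A :=
  fun x y hxy => hA x y fun i hi => hxy i (hi.trans (by exact_mod_cast h))

/-- Shifting the window `[-N, N]` to `[0, 2N]` turns a set depending on it into a union of
cylinders of length `2N + 1`. -/
lemma DependsOnWindow.preimage_eq {N : ℕ} {A : Set (SigmaSFT q T)} (hA : DependsOnWindow N A) :
    shiftSFT^[N] ⁻¹' A = word (2 * N + 1) ⁻¹' (word (2 * N + 1) '' (shiftSFT^[N] ⁻¹' A)) := by
  refine (Set.subset_preimage_image _ _).antisymm ?_
  rintro y ⟨x, hx, hxy⟩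
  refine hA _ _ (fun i hi => ?_) hx
  rw [abs_le] at hi
  rw [shiftSFT_iterate, shiftSFT_iterate]
  have := congrFun hxy ⟨(i + N).toNat, by omega⟩
  simp only [word] at this
  rwa [Int.toNat_of_nonneg (by omega)] at this

lemma DependsOnWindow.measurableSet {N : ℕ} {A : Set (SigmaSFT q T)}
    (hA : DependsOnWindow N A) : MeasurableSet A := by
  let w : SigmaSFT q T → (Finset.Icc (-N : ℤ) N → Fin q) := fun x i => x.1 i
  have hw : Measurable w :=
    measurable_pi_iff.2 fun k => (measurable_pi_apply (k : ℤ)).comp measurable_subtype_coe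
  have : A = w ⁻¹' (w '' A) := by
    refine (Set.subset_preimage_image _ _).antisymm ?_
    rintro y ⟨x, hx, hxy⟩
    refine hA x y (fun i hi => ?_) hx
    rw [abs_le] at hi
    exact congrFun hxy ⟨i, Finset.mem_Icc.2 hi⟩
  rw [this]
  exact hw (Set.toFinite _).measurableSet

lemma isSetAlgebra_dependsOnWindow :
    IsSetAlgebra {A : Set (SigmaSFT q T) | ∃ N, DependsOnWindow N A} where
  empty_mem := ⟨0, fun _ _ _ h => h⟩
  compl_mem := by
    rintro A ⟨N, hA⟩
    exact ⟨N, fun x y hxy hx hy => hx (hA y x (fun i hi => (hxy i hi).symm) hy)⟩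
  union_mem := by
    rintro A B ⟨M, hA⟩ ⟨N, hB⟩
    refine ⟨max M N, fun x y hxy hx => hx.imp ?_ ?_⟩
    · exact hA.mono (le_max_left _ _) x y hxy
    · exact hB.mono (le_max_right _ _) x y hxy

lemma generateFrom_dependsOnWindow :
    (inferInstance : MeasurableSpace (SigmaSFT q T)) =
      MeasurableSpace.generateFrom {A | ∃ N, DependsOnWindow N A} := by
  apply le_antisymm
  · change MeasurableSpace.comap Subtype.val (⨆ i, MeasurableSpace.comap _ _) ≤ _
    rw [MeasurableSpace.comap_iSup]
    refine iSup_le fun i => ?_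
    rw [MeasurableSpace.comap_comp]
    rintro _ ⟨s, _, rfl⟩
    refine MeasurableSpace.measurableSet_generateFrom ⟨i.natAbs, fun x y hxy hx => ?_⟩
    have := hxy i (by simp)
    change y.1 i ∈ s
    rw [← this]
    exact hx
  · refine MeasurableSpace.generateFrom_le ?_
    rintro A ⟨N, hA⟩
    exact hA.measurableSet

lemma DependsOnWindow.measure_inter_le (hC : 1 ≤ C) (hφ : IsSubadditivePotential shiftSFT φ)
    (hG : HasGibbsProperty φ μ C) (hS : MeasurePreserving shiftSFT μ μ) {N n : ℕ}
    (hn : 2 * N + 1 < n) {A B : Set (SigmaSFT q T)} (hA : DependsOnWindow N A)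
    (hB : DependsOnWindow N B) :
    μ.real (A ∩ shiftSFT^[n] ⁻¹' B) ≤ C ^ 4 * μ.real A * μ.real B := by
  have h := measure_inter_preimage_word_le hC hφ hG (by omega) hn
    (word (2 * N + 1) '' (shiftSFT^[N] ⁻¹' A)) (word (2 * N + 1) '' (shiftSFT^[N] ⁻¹' B))
  rw [← hA.preimage_eq, ← hB.preimage_eq, ← Set.preimage_comp, ← Function.iterate_add,
    add_comm, Function.iterate_add, Set.preimage_comp, ← Set.preimage_inter] at h
  rwa [(hS.iterate N).measureReal_preimage hA.measurableSet.nullMeasurableSet,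
    (hS.iterate N).measureReal_preimage hB.measurableSet.nullMeasurableSet,
    (hS.iterate N).measureReal_preimage (hA.measurableSet.inter
      ((hS.iterate n).measurable hB.measurableSet)).nullMeasurableSet] at h

/-- The subadditive Gibbs property implies asymptotic domination with constant `C⁴`; general sets
are approximated by sets depending on a finite window. -/
lemma asympDominated_of_gibbs (hC : 1 ≤ C) (hφ : IsSubadditivePotential shiftSFT φ)
    (hG : HasGibbsProperty φ μ C) (hS : MeasurePreserving shiftSFT μ μ) :
    AsympDominated μ shiftSFT (C ^ 4) := by
  have hdense : μ.MeasureDense {A | ∃ N, DependsOnWindow N A} :=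
    Measure.MeasureDense.of_generateFrom_isSetAlgebra_finite _ isSetAlgebra_dependsOnWindow
      generateFrom_dependsOnWindow
  intro A B hA hB ε hε
  have hD1 : 1 ≤ C ^ 4 := one_le_pow₀ hC
  set D := C ^ 4
  -- Replacing `A` and `B` costs `2δ` on the left and at most `3Dδ` on the right.
  obtain ⟨δ, hδ0, hδ1, hδ⟩ : ∃ δ : ℝ, 0 < δ ∧ δ ≤ 1 ∧ 5 * D * δ ≤ ε := by
    refine ⟨min 1 (ε / (5 * D)), by positivity, min_le_left _ _, ?_⟩
    rw [← le_div_iff₀' (by positivity)]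
    exact min_le_right _ _
  have happrox : ∀ E, MeasurableSet E →
      ∃ E', (∃ N, DependsOnWindow N E') ∧ μ.real (E ∆ E') < δ := by
    intro E hE
    obtain ⟨E', hE', hlt⟩ := hdense.approx E hE (measure_ne_top _ _) δ hδ0
    exact ⟨E', hE', (ENNReal.lt_ofReal_iff_toReal_lt (measure_ne_top _ _)).1 hlt⟩
  obtain ⟨A', ⟨M, hA'⟩, hAA'⟩ := happrox A hA
  obtain ⟨B', ⟨N, hB'⟩, hBB'⟩ := happrox B hB
  have hle : ∀ E E' : Set (SigmaSFT q T), μ.real (E ∆ E') < δ → μ.real E' ≤ μ.real E + δ := by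
    intro E E' h
    have : μ.real E' ≤ μ.real E + μ.real (E ∆ E') := by
      refine (measureReal_mono ?_ (measure_ne_top _ _)).trans (measureReal_union_le _ _)
      intro x hx
      by_cases h : x ∈ E
      · exact Or.inl h
      · exact Or.inr (Or.inr ⟨hx, h⟩)
    linarith
  filter_upwards [eventually_gt_atTop (2 * max M N + 1)] with n hn
  have h1 := (hA'.mono (le_max_left M N)).measure_inter_le hC hφ hG hS hn
    (hB'.mono (le_max_right M N))
  have h2 : μ.real (A ∩ shiftSFT^[n] ⁻¹' B) ≤
      μ.real (A' ∩ shiftSFT^[n] ⁻¹' B') + μ.real (A ∆ A') + μ.real (B ∆ B') := by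
    rw [← (hS.iterate n).measureReal_preimage (hB.symmDiff hB'.measurableSet).nullMeasurableSet]
    refine (measureReal_mono (fun x hx => ?_) (measure_ne_top _ _)).trans
      ((measureReal_union_le (A' ∩ shiftSFT^[n] ⁻¹' B' ∪ A ∆ A') _).trans
        (add_le_add_left (measureReal_union_le _ _) _))
    by_cases hxA : x ∈ A'
    · by_cases hxB : shiftSFT^[n] x ∈ B'
      · exact Or.inl (Or.inl ⟨hxA, hxB⟩)
      · exact Or.inr (Or.inl ⟨hx.2, hxB⟩)
    · exact Or.inl (Or.inr (Or.inl ⟨hx.1, hxA⟩))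
  have h3 := hle A A' hAA'
  have h4 := hle B B' hBB'
  have hA1 : μ.real A ≤ 1 := measureReal_le_one
  have hB1 : μ.real B ≤ 1 := measureReal_le_one
  have h5 : D * μ.real A' * μ.real B' ≤ D * (μ.real A + δ) * (μ.real B + δ) := by gcongr
  have h6 : (μ.real A + δ) * (μ.real B + δ) ≤ μ.real A * μ.real B + 3 * δ := by
    nlinarith [measureReal_nonneg (μ := μ) (s := A), measureReal_nonneg (μ := μ) (s := B)]
  have h7 : D * (μ.real A + δ) * (μ.real B + δ) ≤ D * μ.real A * μ.real B + 3 * D * δ := by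
    nlinarith
  nlinarith

end Gibbs

/-- **Lemma 4.1.** Let `Φ` be a quasi-multiplicative subadditive potential with bounded
distortion on a mixing two-sided subshift of finite type, and let `μ` be its unique
equilibrium state, which has the subadditive Gibbs property. If `μ` is totally ergodic,
then `μ` is mixing. -/
theorem mixing_of_totallyErgodic {q : ℕ} (T : Fin q → Fin q → Bool)
    (hT : IsPrimitive T) (φ : ℕ → SigmaSFT q T → ℝ)
    (hφ : IsSubadditivePotential shiftSFT φ)
    (hqm : IsQuasiMultiplicative T φ)
    (hbd : HasBoundedDistortion distSFT shiftSFT φ)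
    (μ : Measure (SigmaSFT q T))
    (hEq : IsEqState distSFT shiftSFT φ μ)
    (hUnique : ∀ ν : Measure (SigmaSFT q T), IsEqState distSFT shiftSFT φ ν → ν = μ)
    (hGibbs : ∃ C : ℝ, 1 ≤ C ∧ HasGibbsProperty φ μ C)
    (hte : IsTotallyErgodic μ shiftSFT) :
    IsMixing μ shiftSFT := by
  obtain ⟨hprob, hS, -⟩ := hEq
  obtain ⟨C, hC, hG⟩ := hGibbs
  exact isMixing_of_asympDominated (by positivity) hS hte (asympDominated_of_gibbs hC hφ hG hS)

end SubEq
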